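/- Let C be a closed convex cone in a finite-dimensional real normed vector space V and let α be a continuous antinorm associated with C that is linear on a subcone adjacent to the boundary, i.e., there exists p ∈ rb(C^∨) such that p is not identically zero on C and ri(p^∨) ⊆ ri C. Then there exists p ∈ rb(C^∨) such that p is not identically zero on C, p^∨₁ ≠ ∅, and α^∨(p) > 0. -/

import Mathlib

open Set

variable {V : Type*} [NormedAddCommGroup V] [NormedSpace ℝ V]

/-- `C` is a closed convex cone (containing the origin). -/
def IsClosedConvexCone (C : Set V) : Prop :=
  (0 : V) ∈ C ∧ IsClosed C ∧ Convex ℝ C ∧ ∀ c : ℝ, 0 < c → ∀ x ∈ C, c • x ∈ C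

/-- A cone is salient if it contains no nonzero linear subspace,
equivalently it contains no pair `x, -x` with `x ≠ 0`. -/
def IsSalientCone (C : Set V) : Prop := ∀ x ∈ C, x ≠ 0 → -x ∉ C

/-- The relative boundary of a set: the set minus its relative (intrinsic) interior. -/
def relBoundary (C : Set V) : Set V := C \ intrinsicInterior ℝ C

/-- `a` is an antinorm associated with the cone `C` : it takes values in `ℝ ∪ {-∞}`,
is positive on the relative interior of `C`, vanishes on the relative boundary of `C`,
is `-∞` off `C`, is positively homogeneous and superadditive (concave). -/
def IsAntinorm (C : Set V) (a : V → EReal) : Prop :=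
  (∀ v, a v ≠ ⊤) ∧
  (∀ v ∈ intrinsicInterior ℝ C, 0 < a v) ∧
  (∀ v ∈ relBoundary C, a v = 0) ∧
  (∀ v, v ∉ C → a v = ⊥) ∧
  (∀ c : ℝ, 0 < c → ∀ v, a (c • v) = (c : EReal) * a v) ∧
  (∀ v w, a v + a w ≤ a (v + w))

/-- The negative dual cone `C^∨ = {p : ⟨p,u⟩ ≤ 0 ∀ u ∈ C}`. -/
def negDual (C : Set V) : Set (V →L[ℝ] ℝ) := {p | ∀ u ∈ C, p u ≤ 0}

/-- The antisphere of radius `r`. -/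
def antisphere (a : V → EReal) (r : ℝ) : Set V := {v | a v = (r : EReal)}

/-- The dual function `α^∨(p) = -sup_{v ∈ S₁} ⟨p, v⟩`. -/
noncomputable def dualFn (a : V → EReal) (p : V →L[ℝ] ℝ) : EReal :=
  - sSup ((fun v => ((p v : ℝ) : EReal)) '' antisphere a 1)

/-- `p^∨_r` : the set of maximizers of `v ↦ ⟨p, v⟩` over the antisphere `S_r`. -/
def maxSet (a : V → EReal) (p : V →L[ℝ] ℝ) (r : ℝ) : Set V :=
  {v ∈ antisphere a r | ∀ w ∈ antisphere a r, p w ≤ p v}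

/-- `p^∨ = ⋃_{r ≥ 0} p^∨_r`. -/
def pDual (a : V → EReal) (p : V →L[ℝ] ℝ) : Set V := ⋃ r ∈ Ici (0 : ℝ), maxSet a p r

/-!
The functional `p` of the hypothesis already has the required properties. It is nonpositive on `C`
and not identically zero there, hence negative on `ri C`. By homogeneity, if `p` had no maximizer on
`S₁` it would have none on any `S_r` with `r > 0`, and `p^∨` would reduce to `p^∨₀ = C ∩ ker p`.
This is a nonempty convex set, so its relative interior contains a point, which lies in `ri C` by
assumption although `p` vanishes there: a contradiction. Finally, `α^∨(p) = -p(v)` for any maximizer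
`v ∈ S₁`, and `v ∈ ri C` since `α(v) ≠ 0`.
-/

open scoped Topology

section IntrinsicInterior

variable {𝕜 E P : Type*} [AddCommGroup E] [TopologicalSpace E] [TopologicalSpace P]
  [AddTorsor E P] [IsTopologicalAddTorsor P] {s : Set P} {x y : P}

theorem eventually_lineMap_mem_of_mem_intrinsicInterior [Ring 𝕜] [TopologicalSpace 𝕜]
    [Module 𝕜 E] [ContinuousSMul 𝕜 E] (hx : x ∈ intrinsicInterior 𝕜 s)
    (hy : y ∈ affineSpan 𝕜 s) :
    ∀ᶠ t in 𝓝 (0 : 𝕜), AffineMap.lineMap x y t ∈ s := by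
  obtain ⟨x, hxs, rfl⟩ := mem_intrinsicInterior.1 hx
  let γ : 𝕜 → affineSpan 𝕜 s := fun t ↦
    ⟨AffineMap.lineMap (x : P) y t, AffineMap.lineMap_mem t x.2 hy⟩
  have hγ : Continuous γ := AffineMap.lineMap_continuous.subtype_mk _
  have hγ0 : γ 0 = x := Subtype.ext (AffineMap.lineMap_apply_zero _ _)
  have hs : (↑) ⁻¹' s ∈ 𝓝 (γ 0) := hγ0 ▸ mem_interior_iff_mem_nhds.1 hxs
  exact hγ.continuousAt.eventually hs

theorem eq_of_isMaxOn_of_mem_intrinsicInterior [Field 𝕜] [LinearOrder 𝕜]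
    [IsStrictOrderedRing 𝕜] [TopologicalSpace 𝕜] [OrderTopology 𝕜] [Module 𝕜 E]
    [ContinuousSMul 𝕜 E] {f : P →ᵃ[𝕜] 𝕜} (hx : x ∈ intrinsicInterior 𝕜 s)
    (hmax : IsMaxOn f s x) (hy : y ∈ s) : f y = f x := by
  refine (hmax hy).antisymm ?_
  have hmem := eventually_lineMap_mem_of_mem_intrinsicInterior hx (subset_affineSpan 𝕜 s hy)
  obtain ⟨t, hts, ht⟩ : ∃ t : 𝕜, AffineMap.lineMap x y t ∈ s ∧ t < 0 :=
    ((hmem.filter_mono nhdsWithin_le_nhds).and (self_mem_nhdsWithin (s := Iio 0))).exists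
  have hle : t * (f y - f x) + f x ≤ f x := by
    simpa only [mem_ofPred_eq, AffineMap.apply_lineMap, AffineMap.lineMap_apply_ring'] using
      hmax hts
  nlinarith

end IntrinsicInterior

section Antinorm

variable {C : Set V} {a : V → EReal} {p : V →L[ℝ] ℝ} {v : V} {c r : ℝ}

theorem neg_of_mem_negDual_of_mem_intrinsicInterior (hp : p ∈ negDual C)
    (hp0 : ∃ u ∈ C, p u ≠ 0) (hv : v ∈ intrinsicInterior ℝ C) : p v < 0 := by
  obtain ⟨u, hu, hpu⟩ := hp0
  refine (hp v (intrinsicInterior_subset hv)).lt_of_ne fun hpv ↦ hpu ?_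
  have hmax : IsMaxOn p C v := fun w hw ↦ (hp w hw).trans_eq hpv.symm
  exact (eq_of_isMaxOn_of_mem_intrinsicInterior (f := p.toLinearMap.toAffineMap)
    hv hmax hu).trans hpv

theorem dualFn_eq_neg_of_mem_maxSet (hv : v ∈ maxSet a p 1) : dualFn a p = -(p v : EReal) := by
  have hgreatest : IsGreatest ((fun w ↦ (p w : EReal)) '' antisphere a 1) (p v) :=
    ⟨mem_image_of_mem _ hv.1, forall_mem_image.2 fun _ hw ↦ EReal.coe_le_coe (hv.2 _ hw)⟩
  rw [dualFn, hgreatest.isLUB.sSup_eq]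

namespace IsAntinorm

theorem mem_iff_nonneg (ha : IsAntinorm C a) : v ∈ C ↔ 0 ≤ a v := by
  obtain ⟨-, hpos, hzero, hbot, -⟩ := ha
  refine ⟨fun hv ↦ ?_, fun hv ↦ by_contra fun hvC ↦ ?_⟩
  · by_cases hvi : v ∈ intrinsicInterior ℝ C
    · exact (hpos v hvi).le
    · exact (hzero v ⟨hv, hvi⟩).ge
  · simp [hbot v hvC] at hv

theorem convex (ha : IsAntinorm C a) : Convex ℝ C := by
  have ⟨_, _, _, _, hsmul, hadd⟩ := ha
  refine convex_iff_forall_pos.2 fun x hx y hy s t hs ht _ ↦ ha.mem_iff_nonneg.2 ?_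
  calc
    0 ≤ (s : EReal) * a x + (t : EReal) * a y :=
      add_nonneg (EReal.mul_nonneg (EReal.coe_nonneg.2 hs.le) (ha.mem_iff_nonneg.1 hx))
        (EReal.mul_nonneg (EReal.coe_nonneg.2 ht.le) (ha.mem_iff_nonneg.1 hy))
    _ = a (s • x) + a (t • y) := by rw [hsmul s hs, hsmul t ht]
    _ ≤ a (s • x + t • y) := hadd _ _

theorem antisphere_subset (ha : IsAntinorm C a) : antisphere a r ⊆ C := by
  obtain ⟨-, -, -, hbot, -⟩ := ha
  exact fun v hv ↦ by_contra fun hvC ↦ EReal.bot_ne_coe r ((hbot v hvC).symm.trans hv)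

theorem mem_intrinsicInterior_of_mem_antisphere (ha : IsAntinorm C a) (hr : r ≠ 0)
    (hv : v ∈ antisphere a r) : v ∈ intrinsicInterior ℝ C := by
  have ⟨_, _, hzero, _⟩ := ha
  by_contra hvi
  exact hr (EReal.coe_eq_zero.1 (hv.symm.trans (hzero v ⟨ha.antisphere_subset hv, hvi⟩)))

theorem zero_mem_antisphere (ha : IsAntinorm C a) (h0 : 0 ∈ C) : 0 ∈ antisphere a 0 := by
  have ⟨htop, _, _, _, hsmul, _⟩ := ha
  have hdouble : a 0 = (2 : ℝ) * a 0 := by simpa only [smul_zero] using hsmul 2 two_pos 0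
  have hbot : a 0 ≠ ⊥ := (EReal.bot_lt_zero.trans_le (ha.mem_iff_nonneg.1 h0)).ne'
  change a 0 = (0 : ℝ)
  lift a 0 to ℝ using ⟨htop 0, hbot⟩ with x
  norm_cast at hdouble ⊢
  linarith

theorem smul_mem_antisphere (ha : IsAntinorm C a) (hc : 0 < c) (hv : v ∈ antisphere a r) :
    c • v ∈ antisphere a (c * r) := by
  obtain ⟨-, -, -, -, hsmul, -⟩ := ha
  change a v = r at hv
  change a (c • v) = (c * r : ℝ)
  rw [hsmul c hc, hv, EReal.coe_mul]

theorem smul_mem_maxSet (ha : IsAntinorm C a) (hc : 0 < c) (hv : v ∈ maxSet a p r) :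
    c • v ∈ maxSet a p (c * r) := by
  refine ⟨ha.smul_mem_antisphere hc hv.1, fun w hw ↦ ?_⟩
  have hw' : c⁻¹ • w ∈ antisphere a r := by
    simpa only [inv_mul_cancel_left₀ hc.ne'] using ha.smul_mem_antisphere (inv_pos.2 hc) hw
  calc
    p w = c * p (c⁻¹ • w) := by rw [map_smul, smul_eq_mul, mul_inv_cancel_left₀ hc.ne']
    _ ≤ c * p v := mul_le_mul_of_nonneg_left (hv.2 _ hw') hc.le
    _ = p (c • v) := by rw [map_smul, smul_eq_mul]

theorem pDual_eq_maxSet_zero (ha : IsAntinorm C a) (hempty : ¬(maxSet a p 1).Nonempty) :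
    pDual a p = maxSet a p 0 := by
  refine (iUnion₂_subset fun r hr v hv ↦ ?_).antisymm
    (subset_biUnion_of_mem (u := maxSet a p) (mem_Ici.2 le_rfl))
  obtain rfl | hr := (mem_Ici.1 hr).eq_or_lt
  · exact hv
  · refine (hempty ⟨r⁻¹ • v, ?_⟩).elim
    simpa only [inv_mul_cancel₀ hr.ne'] using ha.smul_mem_maxSet (inv_pos.2 hr) hv

theorem maxSet_zero_eq (ha : IsAntinorm C a) (h0 : 0 ∈ C) (hp : p ∈ negDual C)
    (hp0 : ∃ u ∈ C, p u ≠ 0) : maxSet a p 0 = C ∩ p ⁻¹' {0} := by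
  have ⟨_, _, hzero, _⟩ := ha
  ext v
  constructor
  · rintro ⟨hv, hmax⟩
    have hvC := ha.antisphere_subset hv
    exact ⟨hvC, (hp v hvC).antisymm (map_zero p ▸ hmax 0 (ha.zero_mem_antisphere h0))⟩
  · rintro ⟨hvC, hpv : p v = 0⟩
    have hvi : v ∉ intrinsicInterior ℝ C := fun hvi ↦
      (neg_of_mem_negDual_of_mem_intrinsicInterior hp hp0 hvi).ne hpv
    exact ⟨hzero v ⟨hvC, hvi⟩, fun w hw ↦ (hp w (ha.antisphere_subset hw)).trans_eq hpv.symm⟩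

theorem maxSet_one_nonempty [FiniteDimensional ℝ V] (ha : IsAntinorm C a) (h0 : 0 ∈ C)
    (hp : p ∈ negDual C) (hp0 : ∃ u ∈ C, p u ≠ 0)
    (hsub : intrinsicInterior ℝ (pDual a p) ⊆ intrinsicInterior ℝ C) :
    (maxSet a p 1).Nonempty := by
  by_contra hempty
  have hpDual : pDual a p = C ∩ p ⁻¹' {0} :=
    (ha.pDual_eq_maxSet_zero hempty).trans (ha.maxSet_zero_eq h0 hp hp0)
  have hconvex : Convex ℝ (pDual a p) :=
    hpDual ▸ ha.convex.inter ((convex_singleton 0).linear_preimage p.toLinearMap)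
  have hnonempty : (pDual a p).Nonempty := hpDual ▸ ⟨0, h0, map_zero p⟩
  obtain ⟨x, hx⟩ := hnonempty.intrinsicInterior hconvex
  have hpx : p x = 0 := (hpDual ▸ intrinsicInterior_subset hx : x ∈ C ∩ p ⁻¹' {0}).2
  exact (neg_of_mem_negDual_of_mem_intrinsicInterior hp hp0 (hsub hx)).ne hpx

theorem dualFn_pos (ha : IsAntinorm C a) (hp : p ∈ negDual C) (hp0 : ∃ u ∈ C, p u ≠ 0)
    (hne : (maxSet a p 1).Nonempty) : 0 < dualFn a p := by
  obtain ⟨v, hv⟩ := hne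
  rw [dualFn_eq_neg_of_mem_maxSet hv, EReal.neg_pos, EReal.coe_neg']
  exact neg_of_mem_negDual_of_mem_intrinsicInterior hp hp0
    (ha.mem_intrinsicInterior_of_mem_antisphere one_ne_zero hv.1)

end IsAntinorm

theorem statement8_general [FiniteDimensional ℝ V] (h0 : 0 ∈ C) (ha : IsAntinorm C a)
    (hp : p ∈ negDual C) (hp0 : ∃ u ∈ C, p u ≠ 0)
    (hsub : intrinsicInterior ℝ (pDual a p) ⊆ intrinsicInterior ℝ C) :
    (maxSet a p 1).Nonempty ∧ 0 < dualFn a p :=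
  have hne := ha.maxSet_one_nonempty h0 hp hp0 hsub
  ⟨hne, ha.dualFn_pos hp hp0 hne⟩

end Antinorm

/-- If a continuous antinorm `a` associated with a closed convex cone `C` is
linear on a subcone adjacent to the boundary (there is `p ∈ rb(C^∨)`, not identically zero
on `C`, with `ri(p^∨) ⊆ ri C`), then there is `p ∈ rb(C^∨)`, not identically zero on `C`,
with `p^∨₁ ≠ ∅` and `a^∨(p) > 0`. -/
theorem statement8 {V : Type*} [NormedAddCommGroup V] [NormedSpace ℝ V] [FiniteDimensional ℝ V]
    (C : Set V) (hC : IsClosedConvexCone C)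
    (a : V → EReal) (ha : IsAntinorm C a) (hcont : ContinuousOn a C)
    (hlin : ∃ p ∈ relBoundary (negDual C), (∃ u ∈ C, p u ≠ 0) ∧
      intrinsicInterior ℝ (pDual a p) ⊆ intrinsicInterior ℝ C) :
    ∃ p ∈ relBoundary (negDual C), (∃ u ∈ C, p u ≠ 0) ∧
      (maxSet a p 1).Nonempty ∧ 0 < dualFn a p := by
  obtain ⟨p, hp, hp0, hsub⟩ := hlin
  exact ⟨p, hp, hp0, statement8_general hC.1 ha hp.1 hp0 hsub⟩
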